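/- Let f = ∑_{i≥r} f_i ∈ ℂ[x₁,…,xₙ] with f_i zero or homogeneous of degree i, f_r ≠ 0, r ≥ 2. Suppose there is a nonconstant polynomial g with g² | f_r and g | f_{r+1} (including the case f_{r+1} = 0). Then (r+2)·c_0(f) ≤ n + 1. -/

import Mathlib

/-!
The bound is an analytic version of the contact-locus estimate. Fix `R` and, for `0 < ε ≤ 1`,
let `E_ε = {y | ‖y‖ ≤ R, ‖g y‖ ≤ ε}`. Writing `f (ε y) = ∑ ε ^ i f_i(y)`, the divisibilities
`g² ∣ f_r` and `g ∣ f_{r+1}` give `‖f‖ ≤ C ε ^ (r + 2)` on `ε • E_ε` (`norm_eval_le_on_tube`).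
On the other hand `E_ε` is a tube around the zero set of `g`, so it has volume at least `c ε²`
(`volume_tube`), and `ε • E_ε` has volume at least `c ε ^ (2 n + 2)`. Hence, if `‖f‖ ^ (-2s)` is
integrable near `0`, then `ε ^ (2 n + 2 - 2 s (r + 2))` stays bounded as `ε → 0`, which forces
`s (r + 2) ≤ n + 1` (`exponent_le`).

The tube estimate is obtained by slicing with the lines `z + ℂ v` parallel to a direction `v` in
which the top form of `g` does not vanish. For `z` in the unit ball every such line carries a zero
of `g` of uniformly bounded parameter, and by the Lipschitz property `‖g‖ ≤ ε` on a disc of radius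
proportional to `ε` around it. Averaging over `z` (Fubini and translation invariance) yields the
volume bound without any smoothness of the zero set.
-/

open MeasureTheory MvPolynomial

/-- The log-canonical threshold of a polynomial `f ∈ ℂ[x₁,…,xₙ]` at a point `y`
(with `f(y) = 0`), defined analytically as the supremum of the positive reals `s`
such that `‖f‖^{-2s}` is integrable on some neighbourhood of `y`. -/
noncomputable def lctAt {n : ℕ} (f : MvPolynomial (Fin n) ℂ) (y : Fin n → ℂ) : ℝ :=
  sSup {s : ℝ | 0 < s ∧ ∃ U ∈ nhds y,
    MeasureTheory.IntegrableOn
      (fun x : Fin n → ℂ => ‖MvPolynomial.eval x f‖ ^ (-2 * s)) U}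

/-- The (global) log-canonical threshold of `f`, the infimum of the local
log-canonical thresholds over the zeros of `f`. -/
noncomputable def lct {n : ℕ} (f : MvPolynomial (Fin n) ℂ) : ℝ :=
  sInf {c : ℝ | ∃ y, MvPolynomial.eval y f = 0 ∧ c = lctAt f y}

lemma natDegree_coeff_prod_linear {ι : Type*} (T : Finset ι) (z v : ι → ℂ) (s : ι → ℕ) :
    (∏ i ∈ T, (Polynomial.C (z i) + Polynomial.C (v i) * Polynomial.X) ^ s i).natDegree
        ≤ ∑ i ∈ T, s i ∧
      (∏ i ∈ T, (Polynomial.C (z i) + Polynomial.C (v i) * Polynomial.X) ^ s i).coeff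
        (∑ i ∈ T, s i) = ∏ i ∈ T, v i ^ s i := by
  classical
  have hlin (i : ι) :
      (Polynomial.C (z i) + Polynomial.C (v i) * Polynomial.X).natDegree ≤ 1 := by
    rw [add_comm]; exact Polynomial.natDegree_linear_le
  have hpow (i : ι) :
      ((Polynomial.C (z i) + Polynomial.C (v i) * Polynomial.X) ^ s i).natDegree ≤ s i := by
    simpa using Polynomial.natDegree_pow_le_of_le (s i) (hlin i)
  have hcoeff (i : ι) :
      ((Polynomial.C (z i) + Polynomial.C (v i) * Polynomial.X) ^ s i).coeff (s i)
        = v i ^ s i := by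
    have := Polynomial.coeff_pow_of_natDegree_le (m := s i) (hlin i)
    simpa [Polynomial.coeff_C] using this
  induction T using Finset.induction_on with
  | empty => simp
  | insert i T hi ih =>
    simp only [Finset.prod_insert hi, Finset.sum_insert hi]
    refine ⟨Polynomial.natDegree_mul_le.trans (add_le_add (hpow i) ih.1), ?_⟩
    rw [Polynomial.coeff_mul_add_eq_of_natDegree_le (hpow i) ih.1, hcoeff, ih.2]

/-- In a direction `v` where the top-degree form of `g` does not vanish, all restrictions of `g`
to the lines `z + ℂ v` are polynomials of degree exactly `deg g`, with a leading coefficient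
that does not depend on `z`. -/
lemma exists_direction {n : ℕ} (g : MvPolynomial (Fin n) ℂ) (hg : g ≠ 0) :
    ∃ (v : Fin n → ℂ) (a : ℂ), a ≠ 0 ∧ ∀ z : Fin n → ℂ, ∃ p : Polynomial ℂ,
      p.natDegree = g.totalDegree ∧ p.leadingCoeff = a ∧
        ∀ t : ℂ, p.eval t = eval (z + t • v) g := by
  have htop : homogeneousComponent g.totalDegree g ≠ 0 := by
    obtain ⟨s, hs, hsd⟩ := g.support.exists_mem_eq_sup (by simpa using hg)
      (fun s => s.sum fun _ e => e)
    intro h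
    have := congrArg (coeff s) h
    have hd : s.degree = g.totalDegree := hsd.symm
    rw [coeff_homogeneousComponent, if_pos hd, coeff_zero] at this
    exact (mem_support_iff.1 hs) this
  obtain ⟨v, hv⟩ : ∃ v, eval v (homogeneousComponent g.totalDegree g) ≠ 0 := by
    by_contra! h
    exact htop (MvPolynomial.funext fun x => by simpa using h x)
  refine ⟨v, _, hv, fun z => ?_⟩
  set p : Polynomial ℂ :=
    aeval (fun i => Polynomial.C (z i) + Polynomial.C (v i) * Polynomial.X) g with hp
  have hpsum : p = ∑ s ∈ g.support, Polynomial.C (coeff s g) *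
      ∏ i, (Polynomial.C (z i) + Polynomial.C (v i) * Polynomial.X) ^ s i := by
    rw [hp, aeval_def, eval₂_eq']; rfl
  have hdeg (s : Fin n →₀ ℕ) : s.degree = ∑ i, s i := by
    rw [Finsupp.degree_eq_sum]
  have hle : p.natDegree ≤ g.totalDegree := by
    rw [hpsum]
    refine Polynomial.natDegree_sum_le_of_forall_le _ _ fun s hs => ?_
    refine (Polynomial.natDegree_C_mul_le _ _).trans
      ((natDegree_coeff_prod_linear _ z v s).1.trans ?_)
    rw [← hdeg]; exact le_totalDegree hs
  have hc : p.coeff g.totalDegree = eval v (homogeneousComponent g.totalDegree g) := by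
    rw [hpsum, Polynomial.finsetSum_coeff, homogeneousComponent_apply, map_sum,
      Finset.sum_filter]
    refine Finset.sum_congr rfl fun s hs => ?_
    rw [Polynomial.coeff_C_mul]
    have h := natDegree_coeff_prod_linear Finset.univ z v s
    split_ifs with h1
    · rw [← h1, hdeg, h.2, eval_monomial, Finsupp.prod_fintype _ _ (by simp)]
    · have hlt : s.degree < g.totalDegree := lt_of_le_of_ne (le_totalDegree hs) h1
      rw [Polynomial.coeff_eq_zero_of_natDegree_lt (h.1.trans_lt (by rwa [← hdeg])), mul_zero]
  have hn : p.natDegree = g.totalDegree :=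
    le_antisymm hle (Polynomial.le_natDegree_of_ne_zero (by rw [hc]; exact hv))
  refine ⟨p, hn, by rw [Polynomial.leadingCoeff, hn, hc], fun t => ?_⟩
  rw [hpsum, Polynomial.eval_finsetSum, eval_eq']
  simp only [Polynomial.eval_mul, Polynomial.eval_C, Polynomial.eval_prod, Polynomial.eval_pow,
    Polynomial.eval_add, Polynomial.eval_X, Pi.add_apply, Pi.smul_apply, smul_eq_mul, mul_comm t]

/-- A complex polynomial of positive degree has a root of modulus at most `T` as soon as
`|p(0)| < |a| T`, with `a` the leading coefficient and `T ≥ 1`: the product of the moduli of the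
roots is `|p(0)| / |a|`. -/
lemma exists_small_root (p : Polynomial ℂ) (hd : 0 < p.natDegree) (T : ℝ) (hT : 1 ≤ T)
    (h : ‖p.eval 0‖ < ‖p.leadingCoeff‖ * T) : ∃ t, ‖t‖ ≤ T ∧ p.eval t = 0 := by
  by_contra! hcon
  have hs := IsAlgClosed.splits p
  have hp0 : p ≠ 0 := by rintro rfl; simp at hd
  have hroots : ∀ t ∈ p.roots, T ≤ ‖t‖ := fun t ht => by
    by_contra! hlt
    exact hcon t hlt.le ((Polynomial.mem_roots hp0).1 ht)
  have key : ∀ S : Multiset ℂ, (∀ t ∈ S, T ≤ ‖t‖) → T ^ S.card ≤ ‖(S.map fun t => 0 - t).prod‖ := by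
    intro S
    induction S using Multiset.induction_on with
    | empty => simp
    | cons t S ih =>
      intro hS
      simp only [Multiset.card_cons, Multiset.map_cons, Multiset.prod_cons, norm_mul, pow_succ']
      have h1 := hS t (Multiset.mem_cons_self t S)
      have h2 := ih fun u hu => hS u (Multiset.mem_cons_of_mem hu)
      rw [zero_sub, norm_neg]
      gcongr
  have h1 := key _ hroots
  rw [hs.eval_eq_prod_roots, norm_mul] at h
  have h2 : T ≤ T ^ p.roots.card :=
    le_self_pow₀ hT (by rw [← hs.natDegree_eq_card_roots]; exact hd.ne')
  have := mul_le_mul_of_nonneg_left (h2.trans h1) (norm_nonneg p.leadingCoeff)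
  linarith

/-- Fubini and translation invariance for the family of lines `z + ℂ v`: if every line through a
point of `B` in direction `v` meets `S` in a set of parameters `t ∈ D` of area at least `m`, then
`vol B * m ≤ area D * vol S`. -/
lemma volume_mul_le_of_lines {n : ℕ} (v : Fin n → ℂ) (B S : Set (Fin n → ℂ)) (D : Set ℂ)
    (hB : MeasurableSet B) (hS : MeasurableSet S) (hD : MeasurableSet D) (m : ENNReal)
    (h : ∀ z ∈ B, m ≤ volume {t | t ∈ D ∧ z + t • v ∈ S}) :
    volume B * m ≤ volume D * volume S := by
  set Q : Set ((Fin n → ℂ) × ℂ) := {q | q.1 ∈ B ∧ q.2 ∈ D ∧ q.1 + q.2 • v ∈ S} with hQ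
  have hQm : MeasurableSet Q := by
    refine (measurable_fst hB).inter ((measurable_snd hD).inter ?_)
    exact (by fun_prop : Measurable fun q : (Fin n → ℂ) × ℂ => q.1 + q.2 • v) hS
  have h1 : volume B * m ≤ (volume.prod volume) Q := by
    rw [Measure.prod_apply hQm, mul_comm, ← setLIntegral_const]
    rw [← lintegral_indicator hB]
    refine lintegral_mono fun z => ?_
    by_cases hz : z ∈ B
    · rw [Set.indicator_of_mem hz]
      refine (h z hz).trans (measure_mono fun t ht => ?_)
      exact ⟨hz, ht⟩
    · rw [Set.indicator_of_notMem hz]; exact zero_le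
  have h2 : (volume.prod volume) Q ≤ volume D * volume S := by
    rw [Measure.prod_apply_symm hQm, mul_comm, ← setLIntegral_const, ← lintegral_indicator hD]
    refine lintegral_mono fun t => ?_
    by_cases ht : t ∈ D
    · rw [Set.indicator_of_mem ht, ← measure_preimage_add_right volume (t • v) S]
      exact measure_mono fun z hz => hz.2.2
    · rw [Set.indicator_of_notMem ht]
      have : (fun x => (x, t)) ⁻¹' Q = ∅ := by
        ext z; simp [hQ, ht]
      rw [this, measure_empty]
  exact h1.trans h2

lemma measurable_eval {n : ℕ} (g : MvPolynomial (Fin n) ℂ) :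
    Measurable fun x : Fin n → ℂ => eval x g :=
  (MvPolynomial.continuous_eval g).measurable

/-- The zero set of a nonzero polynomial is a null set: lines in a suitable direction meet it in
finitely many points. -/
lemma volume_zeroSet {n : ℕ} (f : MvPolynomial (Fin n) ℂ) (hf : f ≠ 0) :
    volume {x : Fin n → ℂ | eval x f = 0} = 0 := by
  obtain ⟨v, a, ha, hp⟩ := exists_direction f hf
  have hZ : MeasurableSet {x : Fin n → ℂ | eval x f = 0} :=
    measurable_eval f (measurableSet_singleton 0)
  set Q : Set ((Fin n → ℂ) × ℂ) := {q | eval (q.1 + q.2 • v) f = 0} with hQ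
  have hQm : MeasurableSet Q :=
    (by fun_prop : Measurable fun q : (Fin n → ℂ) × ℂ => q.1 + q.2 • v) hZ
  have hQ0 : (volume.prod volume) Q = 0 := by
    refine (Measure.measure_prod_null hQm).2 (Filter.Eventually.of_forall fun z => ?_)
    obtain ⟨p, -, hpl, hpe⟩ := hp z
    have hp0 : p ≠ 0 := by rintro rfl; exact ha (by simpa using hpl.symm)
    refine Set.Finite.measure_zero ((p.roots.toFinset.finite_toSet).subset fun t ht => ?_) _
    have ht' : eval (z + t • v) f = 0 := ht
    simpa [hp0, hpe] using ht'
  rw [Measure.prod_apply_symm hQm] at hQ0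
  have hconst (t : ℂ) : volume ((fun x => (x, t)) ⁻¹' Q)
      = volume {x : Fin n → ℂ | eval x f = 0} := by
    rw [← measure_preimage_add_right volume (t • v) {x : Fin n → ℂ | eval x f = 0}]
    rfl
  simp_rw [hconst] at hQ0
  rw [lintegral_const, mul_eq_zero] at hQ0
  exact hQ0.resolve_right (by simp)

/-- A tube of width `ε` around the zero set of a nonconstant polynomial has volume at least
`c ε²`. -/
lemma volume_tube {n : ℕ} (g : MvPolynomial (Fin n) ℂ) (hg : 0 < g.totalDegree) :
    ∃ R c : ℝ, 0 < R ∧ 0 < c ∧ ∀ ε : ℝ, 0 < ε → ε ≤ 1 →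
      ENNReal.ofReal (c * ε ^ 2) ≤
        volume {y : Fin n → ℂ | ‖y‖ ≤ R ∧ ‖eval y g‖ ≤ ε} := by
  have hg0 : g ≠ 0 := by rintro rfl; simp at hg
  obtain ⟨v, a, ha, hp⟩ := exists_direction g hg0
  obtain ⟨M, hM⟩ := (isCompact_closedBall (0 : Fin n → ℂ) 1).exists_bound_of_continuousOn
    (MvPolynomial.continuous_eval g).continuousOn
  have ha' : 0 < ‖a‖ := norm_pos_iff.2 ha
  obtain ⟨T, hT1, hT⟩ : ∃ T : ℝ, 1 ≤ T ∧ M < ‖a‖ * T := by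
    refine ⟨max 1 (M / ‖a‖ + 1), le_max_left _ _, ?_⟩
    have : M / ‖a‖ < max 1 (M / ‖a‖ + 1) := lt_of_lt_of_le (by linarith) (le_max_right _ _)
    rwa [div_lt_iff₀' ha'] at this
  set R : ℝ := 1 + (T + 1) * ‖v‖ with hR
  have hR0 : 0 < R := by positivity
  obtain ⟨K, hK⟩ : ∃ K, LipschitzOnWith K (fun y => eval y g)
      (Metric.closedBall (0 : Fin n → ℂ) R) := by
    refine LocallyLipschitzOn.exists_lipschitzOnWith_of_compact (isCompact_closedBall _ _) ?_
    have : ContDiff ℝ 1 (fun y : Fin n → ℂ => eval y g) := by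
      have h := (AnalyticOnNhd.eval_mvPolynomial (𝕜 := ℂ) g).contDiff (n := 1)
      exact h.restrict_scalars ℝ
    exact this.locallyLipschitz.locallyLipschitzOn
  -- `L` is a Lipschitz constant for `g` along the lines, enlarged so that `ε / L ≤ 1`.
  set L : ℝ := K * ‖v‖ + 1 with hL
  have hL1 : 1 ≤ L := by
    have : 0 ≤ K * ‖v‖ := by positivity
    linarith
  have hL0 : 0 < L := by linarith
  set B := Metric.ball (0 : Fin n → ℂ) 1
  set D := Metric.ball (0 : ℂ) (T + 1)
  have hBpos : 0 < (volume B).toReal :=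
    ENNReal.toReal_pos (Metric.measure_ball_pos _ _ one_pos).ne' measure_ball_lt_top.ne
  have hDpos : 0 < (volume D).toReal :=
    ENNReal.toReal_pos (Metric.measure_ball_pos _ _ (by linarith)).ne' measure_ball_lt_top.ne
  refine ⟨R, (volume B).toReal * Real.pi / L ^ 2 / (volume D).toReal, hR0, by positivity,
    fun ε hε hε1 => ?_⟩
  set S := {y : Fin n → ℂ | ‖y‖ ≤ R ∧ ‖eval y g‖ ≤ ε} with hS
  have hSm : MeasurableSet S :=
    (measurable_norm measurableSet_Iic).inter ((measurable_eval g).norm measurableSet_Iic)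
  have hkey : volume B * ENNReal.ofReal (Real.pi * (ε / L) ^ 2) ≤ volume D * volume S := by
    refine volume_mul_le_of_lines v B S D measurableSet_ball hSm measurableSet_ball _
      fun z hz => ?_
    have hz1 : ‖z‖ ≤ 1 := by simpa [B] using (Metric.mem_ball.1 hz).le
    obtain ⟨p, hpd, hpl, hpe⟩ := hp z
    obtain ⟨t₀, ht₀, hroot⟩ := exists_small_root p (by rw [hpd]; exact hg) T hT1 (by
      rw [hpe, hpl]
      refine lt_of_le_of_lt ?_ hT
      simpa using hM z (by simpa using hz1))
    rw [hpe] at hroot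
    have hεL : ε / L ≤ 1 := by rw [div_le_one hL0]; linarith
    have hmemR : ∀ t : ℂ, ‖t‖ ≤ T + 1 → ‖z + t • v‖ ≤ R := fun t ht => by
      refine (norm_add_le _ _).trans ?_
      rw [norm_smul]
      have := mul_le_mul_of_nonneg_right ht (norm_nonneg v)
      linarith
    calc ENNReal.ofReal (Real.pi * (ε / L) ^ 2) = volume (Metric.ball t₀ (ε / L)) := by
          rw [Complex.volume_ball, mul_comm, ENNReal.ofReal_mul (by positivity),
            ENNReal.ofReal_pow (by positivity)]
          congr 1
          simpa using ENNReal.ofReal_coe_nnreal (p := NNReal.pi)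
      _ ≤ _ := measure_mono fun t ht => by
          have ht' : ‖t - t₀‖ < ε / L := by simpa [dist_eq_norm] using ht
          have htT : ‖t‖ < T + 1 := by
            have : ‖t‖ ≤ ‖t - t₀‖ + ‖t₀‖ := by simpa using norm_add_le (t - t₀) t₀
            linarith
          refine ⟨by simpa [D] using htT, hmemR t htT.le, ?_⟩
          have h1 := hK.dist_le_mul (z + t • v) (by simpa using hmemR t htT.le) (z + t₀ • v)
            (by simpa using hmemR t₀ (by linarith))
          simp only [hroot, dist_zero_right] at h1
          refine h1.trans ?_
          rw [dist_add_left, dist_eq_norm, ← sub_smul, norm_smul]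
          rw [lt_div_iff₀ hL0] at ht'
          have := norm_nonneg (t - t₀)
          nlinarith
  have hSfin : volume S ≠ ⊤ := by
    refine ne_top_of_le_ne_top (measure_closedBall_lt_top (x := (0 : Fin n → ℂ)) (r := R)).ne
      (measure_mono fun y hy => by simpa using hy.1)
  refine ENNReal.ofReal_le_of_le_toReal ?_
  have h2 := ENNReal.toReal_mono
    (ENNReal.mul_ne_top (measure_ball_lt_top (x := (0 : ℂ)) (r := T + 1)).ne hSfin) hkey
  rw [ENNReal.toReal_mul, ENNReal.toReal_mul, ENNReal.toReal_ofReal (by positivity)] at h2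
  have h3 : (volume B).toReal * Real.pi / L ^ 2 / (volume D).toReal * ε ^ 2
      = (volume B).toReal * (Real.pi * (ε / L) ^ 2) / (volume D).toReal := by
    field_simp
  rw [h3, div_le_iff₀ hDpos, mul_comm (volume S).toReal]
  exact h2

lemma eval_smul_homogeneous {n i : ℕ} {p : MvPolynomial (Fin n) ℂ} (hp : p.IsHomogeneous i)
    (c : ℂ) (y : Fin n → ℂ) : eval (c • y) p = c ^ i * eval y p := by
  rw [eval_eq', eval_eq', Finset.mul_sum]
  refine Finset.sum_congr rfl fun s hs => ?_
  have hd : ∑ j, s j = i := by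
    rw [← Finsupp.degree_eq_sum]
    rw [← hp (mem_support_iff.1 hs), Finsupp.degree_eq_weight_one]; rfl
  simp only [Pi.smul_apply, smul_eq_mul, mul_pow, Finset.prod_mul_distrib,
    Finset.prod_pow_eq_pow_sum, hd]
  ring

/-- On the tube `‖g‖ ≤ ε`, rescaled by `ε`, the polynomial `f` has size `O(ε ^ (r + 2))`: the
form of degree `r` gains `ε²` from `g²`, the form of degree `r + 1` gains `ε` from `g`. -/
lemma norm_eval_le_on_tube {n : ℕ} (f g : MvPolynomial (Fin n) ℂ) (r : ℕ)
    (hlow : ∀ i < r, homogeneousComponent i f = 0)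
    (hdvd : g ^ 2 ∣ homogeneousComponent r f)
    (hdvd' : g ∣ homogeneousComponent (r + 1) f) (R : ℝ) :
    ∃ C : ℝ, 0 < C ∧ ∀ ε : ℝ, 0 < ε → ε ≤ 1 → ∀ y : Fin n → ℂ, ‖y‖ ≤ R → ‖eval y g‖ ≤ ε →
      ‖eval ((ε : ℂ) • y) f‖ ≤ C * ε ^ (r + 2) := by
  have hbdd (q : MvPolynomial (Fin n) ℂ) : ∃ M : ℝ, 0 ≤ M ∧ ∀ y : Fin n → ℂ, ‖y‖ ≤ R →
      ‖eval y q‖ ≤ M := by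
    obtain ⟨M, hM⟩ := (isCompact_closedBall (0 : Fin n → ℂ) R).exists_bound_of_continuousOn
      (MvPolynomial.continuous_eval q).continuousOn
    exact ⟨max M 0, le_max_right _ _, fun y hy =>
      (hM y (by simpa using hy)).trans (le_max_left _ _)⟩
  have hterm (i : ℕ) : ∃ M : ℝ, 0 ≤ M ∧ ∀ ε : ℝ, 0 < ε → ε ≤ 1 → ∀ y : Fin n → ℂ, ‖y‖ ≤ R →
      ‖eval y g‖ ≤ ε → ‖eval ((ε : ℂ) • y) (homogeneousComponent i f)‖ ≤ M * ε ^ (r + 2) := by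
    have hhom := homogeneousComponent_isHomogeneous i f
    rcases lt_or_ge i r with hi | hi
    · exact ⟨0, le_rfl, fun ε _ _ y _ _ => by simp [hlow i hi]⟩
    rcases hi.eq_or_lt with rfl | hi
    · obtain ⟨h, hh⟩ := hdvd
      obtain ⟨M, hM0, hM⟩ := hbdd h
      refine ⟨M, hM0, fun ε hε hε1 y hy hyg => ?_⟩
      rw [eval_smul_homogeneous hhom, hh, map_mul, map_pow, norm_mul, norm_mul, norm_pow,
        norm_pow, Complex.norm_real, Real.norm_of_nonneg hε.le]
      calc ε ^ r * (‖eval y g‖ ^ 2 * ‖eval y h‖) ≤ ε ^ r * (ε ^ 2 * M) := by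
            gcongr
            exact hM y hy
        _ = M * ε ^ (r + 2) := by ring
    rcases (Nat.succ_le_of_lt hi).eq_or_lt with rfl | hi
    · obtain ⟨h, hh⟩ := hdvd'
      obtain ⟨M, hM0, hM⟩ := hbdd h
      refine ⟨M, hM0, fun ε hε hε1 y hy hyg => ?_⟩
      rw [eval_smul_homogeneous hhom, Nat.succ_eq_add_one, hh, map_mul, norm_mul, norm_mul,
        norm_pow, Complex.norm_real, Real.norm_of_nonneg hε.le]
      calc ε ^ (r + 1) * (‖eval y g‖ * ‖eval y h‖) ≤ ε ^ (r + 1) * (ε * M) := by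
            gcongr
            exact hM y hy
        _ = M * ε ^ (r + 2) := by ring
    · obtain ⟨M, hM0, hM⟩ := hbdd (homogeneousComponent i f)
      refine ⟨M, hM0, fun ε hε hε1 y hy hyg => ?_⟩
      rw [eval_smul_homogeneous hhom, norm_mul, norm_pow, Complex.norm_real,
        Real.norm_of_nonneg hε.le, mul_comm]
      exact mul_le_mul (hM y hy) (pow_le_pow_of_le_one hε.le hε1 hi) (by positivity) hM0
  choose M hM0 hM using hterm
  refine ⟨∑ i ∈ Finset.range (f.totalDegree + 1), M i + 1,
    add_pos_of_nonneg_of_pos (Finset.sum_nonneg fun i _ => hM0 i) one_pos,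
    fun ε hε hε1 y hy hyg => ?_⟩
  calc ‖eval ((ε : ℂ) • y) f‖
      = ‖∑ i ∈ Finset.range (f.totalDegree + 1),
          eval ((ε : ℂ) • y) (homogeneousComponent i f)‖ := by
        rw [← map_sum, sum_homogeneousComponent]
    _ ≤ ∑ i ∈ Finset.range (f.totalDegree + 1), M i * ε ^ (r + 2) :=
        (norm_sum_le _ _).trans (Finset.sum_le_sum fun i _ => hM i ε hε hε1 y hy hyg)
    _ ≤ _ := by
        rw [← Finset.sum_mul]
        gcongr
        linarith

open scoped Pointwise in
/-- The integral of `‖f‖ ^ (-2s)` over the rescaled tube of width `ε` is at least a constant times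
`ε ^ (2n + 2 - 2s(r + 2))`, hence unbounded as `ε → 0` when `s (r + 2) > n + 1`. -/
lemma exponent_le {n : ℕ} (f g : MvPolynomial (Fin n) ℂ) (r : ℕ) (hf : f ≠ 0)
    (hlow : ∀ i < r, homogeneousComponent i f = 0) (hg : 0 < g.totalDegree)
    (hdvd : g ^ 2 ∣ homogeneousComponent r f)
    (hdvd' : g ∣ homogeneousComponent (r + 1) f)
    (s : ℝ) (hs : 0 < s) (U : Set (Fin n → ℂ)) (hU : U ∈ nhds 0)
    (hint : IntegrableOn (fun x : Fin n → ℂ => ‖eval x f‖ ^ (-2 * s)) U) :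
    s * (r + 2) ≤ n + 1 := by
  by_contra! hcon
  obtain ⟨R, c, hR, hc, htube⟩ := volume_tube g hg
  obtain ⟨C, hC, hbound⟩ := norm_eval_le_on_tube f g r hlow hdvd hdvd' R
  obtain ⟨δ, hδ, hδU⟩ := Metric.mem_nhds_iff.1 hU
  set I := ∫⁻ x in U, ENNReal.ofReal (‖eval x f‖ ^ (-2 * s)) with hI
  have hItop : I ≠ ⊤ := (Integrable.lintegral_lt_top hint).ne
  have main : ∀ ε : ℝ, 0 < ε → ε ≤ 1 → ε * R < δ →
      C ^ (-2 * s) * c * ε ^ (-(2 * (s * (r + 2) - (n + 1)))) ≤ I.toReal := by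
    intro ε hε hε1 hεR
    set E := {y : Fin n → ℂ | ‖y‖ ≤ R ∧ ‖eval y g‖ ≤ ε} with hE
    have hAU : ε • E ⊆ U := by
      rintro _ ⟨y, hy, rfl⟩
      refine hδU ?_
      simp only [mem_ball_zero_iff, norm_smul, Real.norm_of_nonneg hε.le]
      exact lt_of_le_of_lt (by gcongr; exact hy.1) hεR
    have hEm : MeasurableSet E :=
      (measurable_norm measurableSet_Iic).inter ((measurable_eval g).norm measurableSet_Iic)
    have hAm : MeasurableSet (ε • E) := hEm.const_smul₀ ε
    have hvol : ENNReal.ofReal (c * ε ^ (2 * n + 2)) ≤ volume (ε • E) := by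
      rw [Measure.addHaar_smul_of_nonneg _ hε.le]
      have hfin : Module.finrank ℝ (Fin n → ℂ) = 2 * n := by
        rw [Module.finrank_pi_fintype]; simp [mul_comm]
      rw [hfin, show c * ε ^ (2 * n + 2) = ε ^ (2 * n) * (c * ε ^ 2) by ring,
        ENNReal.ofReal_mul (by positivity)]
      gcongr
      exact htube ε hε hε1
    have h1 : ENNReal.ofReal ((C * ε ^ (r + 2)) ^ (-2 * s)) * volume (ε • E) ≤ I := by
      rw [← setLIntegral_const]
      refine le_trans ?_ (lintegral_mono_set hAU)
      refine setLIntegral_mono_ae' hAm ?_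
      -- On the zero set of `f` the real power takes the junk value `0`, but that set is null.
      have hne : ∀ᵐ x : Fin n → ℂ, eval x f ≠ 0 := by
        rw [ae_iff]; simpa using volume_zeroSet f hf
      filter_upwards [hne] with x hx hxA
      obtain ⟨y, hy, rfl⟩ := hxA
      refine ENNReal.ofReal_le_ofReal ?_
      refine Real.rpow_le_rpow_of_nonpos (norm_pos_iff.2 hx) ?_ (by linarith)
      exact hbound ε hε hε1 y hy.1 hy.2
    have h2 := ENNReal.toReal_mono hItop
      ((mul_le_mul_right hvol (ENNReal.ofReal ((C * ε ^ (r + 2)) ^ (-2 * s)))).trans h1)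
    rw [← ENNReal.ofReal_mul (by positivity), ENNReal.toReal_ofReal (by positivity)] at h2
    refine le_of_eq_of_le ?_ h2
    rw [Real.mul_rpow hC.le (by positivity), ← Real.rpow_natCast ε (r + 2),
      ← Real.rpow_natCast ε (2 * n + 2), ← Real.rpow_mul hε.le]
    have : ε ^ (-(2 * (s * (r + 2) - (n + 1))))
        = ε ^ (((r + 2 : ℕ) : ℝ) * (-2 * s)) * ε ^ ((2 * n + 2 : ℕ) : ℝ) := by
      rw [← Real.rpow_add hε]
      congr 1
      push_cast
      ring
    rw [this]
    ring
  have hlim : Filter.Tendsto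
      (fun ε : ℝ => C ^ (-2 * s) * c * ε ^ (-(2 * (s * (r + 2) - (n + 1)))))
      (nhdsWithin 0 (Set.Ioi 0)) Filter.atTop :=
    (tendsto_rpow_neg_nhdsGT_zero (by linarith)).const_mul_atTop (by positivity)
  have hsmall : ∀ᶠ ε : ℝ in nhdsWithin 0 (Set.Ioi 0), ε * R < δ ∧ ε < 1 ∧ 0 < ε := by
    have h1 : ∀ᶠ ε : ℝ in nhdsWithin 0 (Set.Ioi 0), ε < min (δ / R) 1 :=
      mem_nhdsWithin_of_mem_nhds (Iio_mem_nhds (by positivity))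
    filter_upwards [h1, self_mem_nhdsWithin] with ε h hpos
    exact ⟨(lt_div_iff₀ hR).1 (h.trans_le (min_le_left _ _)), h.trans_le (min_le_right _ _), hpos⟩
  obtain ⟨ε, hgt, h1, h2, h3⟩ := ((hlim.eventually_gt_atTop I.toReal).and hsmall).exists
  exact absurd (main ε h3 h2.le h1) (not_le.2 hgt)

/-- Write `f = ∑_{i≥r} f_i` with `f_r ≠ 0`, `r ≥ 2`, and suppose there is a
nonconstant polynomial `g` with `g² ∣ f_r` and `g ∣ f_{r+1}`.
Then `(r+2)·c₀(f) ≤ n + 1`. -/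
theorem stmt10 {n : ℕ} (f g : MvPolynomial (Fin n) ℂ) (r : ℕ)
    (hf : 0 < f.totalDegree) (hr : 2 ≤ r)
    (hlow : ∀ i < r, MvPolynomial.homogeneousComponent i f = 0)
    (hfr : MvPolynomial.homogeneousComponent r f ≠ 0)
    (hg : 0 < g.totalDegree)
    (hdvd : g ^ 2 ∣ MvPolynomial.homogeneousComponent r f)
    (hdvd' : g ∣ MvPolynomial.homogeneousComponent (r + 1) f) :
    ((r : ℝ) + 2) * lctAt f 0 ≤ (n : ℝ) + 1 := by
  have hf0 : f ≠ 0 := by rintro rfl; simp at hf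
  have hr2 : (0 : ℝ) < r + 2 := by positivity
  rw [mul_comm, ← le_div_iff₀ hr2]
  refine Real.sSup_le ?_ (by positivity)
  rintro s ⟨hs, U, hU, hint⟩
  rw [le_div_iff₀ hr2]
  exact exponent_le f g r hf0 hlow hg hdvd hdvd' s hs U hU hint
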